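/- Let H be a complex Hilbert space, J a signature operator on H, L a densely defined positive self-adjoint operator in H, and B := JL. Assume B is similar to a self-adjoint operator in H. Then for every φ₊ ∈ H₊ there exists a unique function ψ : [0, ∞) → H which is continuous on [0, ∞), continuously differentiable on (0, ∞), satisfies ψ(x) ∈ dom B and ψ′(x) = −Bψ(x) for all x > 0, satisfies P₊ψ(0) = φ₊, and is bounded: sup_{x ≥ 0} ‖ψ(x)‖ < ∞. -/

import Mathlib

open scoped ComplexOrder InnerProductSpace

noncomputable section

variable {H : Type*} [NormedAddCommGroup H] [InnerProductSpace ℂ H] [CompleteSpace H]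

/-- `J` is a signature operator: `J = J* = J⁻¹`. -/
def IsSignatureOperator (J : H →L[ℂ] H) : Prop :=
  IsSelfAdjoint J ∧ J.comp J = ContinuousLinearMap.id ℂ H

/-- The orthogonal projection onto `H₊ = ker (J - I)`, which equals `(I + J)/2`
for a signature operator `J`. -/
def Pplus (J : H →L[ℂ] H) : H →L[ℂ] H := (2⁻¹ : ℂ) • (ContinuousLinearMap.id ℂ H + J)

/-- The orthogonal projection onto `H₋ = ker (J + I)`, which equals `(I - J)/2`
for a signature operator `J`. -/
def Pminus (J : H →L[ℂ] H) : H →L[ℂ] H := (2⁻¹ : ℂ) • (ContinuousLinearMap.id ℂ H - J)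

/-- The composition `J ∘ L` of a bounded operator `J` with an unbounded operator `L`,
as an unbounded operator with the same domain as `L`. -/
def pmapComp (J : H →L[ℂ] H) (L : H →ₗ.[ℂ] H) : H →ₗ.[ℂ] H :=
  { domain := L.domain
    toFun := (J : H →ₗ[ℂ] H).comp L.toFun }

/-- `L` is a positive operator: `⟨L h, h⟩ > 0` for every nonzero `h ∈ dom L`. -/
def IsPositivePMap (L : H →ₗ.[ℂ] H) : Prop :=
  ∀ h : L.domain, (h : H) ≠ 0 → 0 < ⟪L h, (h : H)⟫_ℂ

/-- `B` is similar to a self-adjoint operator: there is a bounded operator `S` with bounded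
inverse mapping `dom B` onto the domain of a self-adjoint operator `A` such that
`A (S h) = S (B h)` for all `h ∈ dom B`. -/
def SimilarToSelfAdjoint (B : H →ₗ.[ℂ] H) : Prop :=
  ∃ (S : H ≃L[ℂ] H) (A : H →ₗ.[ℂ] H), IsSelfAdjoint A ∧
    (A.domain : Set H) = (fun h => S h) '' (B.domain : Set H) ∧
    ∀ (h : B.domain) (hSh : S (h : H) ∈ A.domain), A ⟨S (h : H), hSh⟩ = S (B h)

/-- `ψ` solves `ψ' = -B ψ + f` on the set `s` with a continuous derivative:
on `s`, `ψ` takes values in `dom B`, is differentiable with derivative `ψ'`,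
`ψ'` is continuous on `s`, and `ψ' x = -B (ψ x) + f x`. -/
def IsStrongSolutionOn (B : H →ₗ.[ℂ] H) (f : ℝ → H) (ψ : ℝ → H) (s : Set ℝ) : Prop :=
  ∃ ψ' : ℝ → H, ContinuousOn ψ' s ∧
    ∀ x ∈ s, HasDerivAt ψ (ψ' x) x ∧
      ∃ hx : ψ x ∈ B.domain, ψ' x = -(B ⟨ψ x, hx⟩) + f x

/-!
Let `A = S B S⁻¹` be the self-adjoint operator. If `k` lies in the spectral subspace `K₊` of `A`
for `[0, ∞)`, then `exp (-x|A|) k` is a bounded solution of `u' = -A u`; conversely a bounded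
solution stays in `K₊`, because its component in the complement grows like `exp (x|A|)`. The
functional calculus of `A` is that of the bounded normal operator `(A + i)⁻¹`.

Along solutions of `ψ' = -Bψ` the form `⟨Jψ, ψ⟩` decreases, its derivative being `-2⟨Lψ, ψ⟩`.
As `exp (-x|A|)` tends strongly to zero, the form is nonnegative on `V₊ = S⁻¹ K₊` and nonpositive on
the complementary subspace. Nonnegativity gives uniqueness: a bounded solution with `P₊ψ(0) = 0`
has `⟨Jψ, ψ⟩ = 0` throughout, hence `⟨Lψ, ψ⟩ = 0`. It also makes `P₊` bounded below on `V₊`, and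
then every vector of `H₊` is in `P₊V₊`, since a vector of `H₊` orthogonal to `V₊` must vanish.
-/

open Filter Topology

theorem inner_eq_of_mem_graph {A : H →ₗ.[ℂ] H} (hA : IsSelfAdjoint A) {a b c d : H}
    (hab : (a, b) ∈ A.graph) (hcd : (c, d) ∈ A.graph) : ⟪b, c⟫_ℂ = ⟪a, d⟫_ℂ := by
  obtain ⟨x, rfl, rfl⟩ := A.mem_graph_iff.1 hab
  obtain ⟨y, rfl, rfl⟩ := A.mem_graph_iff.1 hcd
  have h := LinearPMap.adjoint_isFormalAdjoint hA.dense_domain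
  rw [LinearPMap.isSelfAdjoint_def.mp hA] at h
  exact h x y

theorem mem_graph_of_forall_inner_eq {A : H →ₗ.[ℂ] H} (hA : IsSelfAdjoint A) {c d : H}
    (h : ∀ a b, (a, b) ∈ A.graph → ⟪b, c⟫_ℂ = ⟪a, d⟫_ℂ) : (c, d) ∈ A.graph := by
  have hadj : A.graph = A.graph.adjoint := by
    conv_lhs => rw [← LinearPMap.isSelfAdjoint_def.mp hA]
    exact LinearPMap.adjoint_graph_eq_graph_adjoint hA.dense_domain
  rw [hadj, Submodule.mem_adjoint_iff]
  exact fun a b hab => sub_eq_zero.2 (h a b hab)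

/-- `Q = (1 + A²)⁻¹` and `D = A (1 + A²)⁻¹` for a self-adjoint operator `A`, encoded without
products of unbounded operators: `(Q h, D h)` lies on the graph of `A`, and so does
`(A (Q h), A² (Q h)) = (D h, h - Q h)`. -/
structure IsResolventPair (A : H →ₗ.[ℂ] H) (Q D : H →L[ℂ] H) : Prop where
  isSelfAdjoint : IsSelfAdjoint A
  mem_graph : ∀ h, (Q h, D h) ∈ A.graph
  sub_mem_graph : ∀ h, (D h, h - Q h) ∈ A.graph

/-- `(Q h, D h)` is the orthogonal projection of `(h, 0)` on the graph of `A`. -/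
theorem exists_isResolventPair {A : H →ₗ.[ℂ] H} (hA : IsSelfAdjoint A) :
    ∃ Q D : H →L[ℂ] H, IsResolventPair A Q D := by
  let e := WithLp.prodContinuousLinearEquiv 2 ℂ H H
  let G : Submodule ℂ (WithLp 2 (H × H)) := A.graph.comap (e : WithLp 2 (H × H) →ₗ[ℂ] H × H)
  have mem_G (p) : p ∈ G ↔ e p ∈ A.graph := Iff.rfl
  have hG : IsClosed (G : Set (WithLp 2 (H × H))) := hA.isClosed.preimage e.continuous
  have : CompleteSpace G := hG.completeSpace_coe
  let P : H →L[ℂ] H × H := (e : WithLp 2 (H × H) →L[ℂ] H × H) ∘L G.starProjection ∘L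
    (e.symm : H × H →L[ℂ] WithLp 2 (H × H)) ∘L ContinuousLinearMap.inl ℂ H H
  refine ⟨ContinuousLinearMap.fst ℂ H H ∘L P, ContinuousLinearMap.snd ℂ H H ∘L P, hA,
    fun h => (mem_G _).1 (G.starProjection_apply_mem (e.symm (h, 0))), fun h => ?_⟩
  refine mem_graph_of_forall_inner_eq hA fun a b hab => ?_
  have horth := (Submodule.mem_orthogonal _ _).1
    (G.sub_starProjection_mem_orthogonal (e.symm (h, 0))) (e.symm (a, b))
    (by rwa [mem_G, e.apply_symm_apply])
  rw [WithLp.prod_inner_apply] at horth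
  have hsum : ⟪a, h - (P h).1⟫_ℂ + ⟪b, 0 - (P h).2⟫_ℂ = 0 := horth
  rw [zero_sub, inner_neg_right] at hsum
  change ⟪b, (P h).2⟫_ℂ = ⟪a, h - (P h).1⟫_ℂ
  linear_combination -hsum

/-- The resolvent `(A + i)⁻¹ = A (1 + A²)⁻¹ - i (1 + A²)⁻¹`. -/
def resolventOf (Q D : H →L[ℂ] H) : H →L[ℂ] H := D - Complex.I • Q

namespace IsResolventPair

variable {A : H →ₗ.[ℂ] H} {Q D : H →L[ℂ] H} (h : IsResolventPair A Q D)
include h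

theorem fst_isSelfAdjoint : IsSelfAdjoint Q := by
  refine ContinuousLinearMap.isSelfAdjoint_iff_isSymmetric.2 fun u v => ?_
  have h₁ := inner_eq_of_mem_graph h.isSelfAdjoint (h.mem_graph u) (h.sub_mem_graph v)
  have h₂ := inner_eq_of_mem_graph h.isSelfAdjoint (h.sub_mem_graph u) (h.mem_graph v)
  rw [inner_sub_right] at h₁
  rw [inner_sub_left] at h₂
  change ⟪Q u, v⟫_ℂ = ⟪u, Q v⟫_ℂ
  linear_combination -h₁ - h₂

theorem snd_isSelfAdjoint : IsSelfAdjoint D := by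
  refine ContinuousLinearMap.isSelfAdjoint_iff_isSymmetric.2 fun u v => ?_
  have h₁ := inner_eq_of_mem_graph h.isSelfAdjoint (h.mem_graph u) (h.mem_graph v)
  have h₂ := inner_eq_of_mem_graph h.isSelfAdjoint (h.sub_mem_graph u) (h.sub_mem_graph v)
  rw [inner_sub_right, inner_sub_left] at h₂
  change ⟪D u, v⟫_ℂ = ⟪u, D v⟫_ℂ
  linear_combination h₁ - h₂

theorem fst_apply_eq_snd_apply {a b : H} (hab : (a, b) ∈ A.graph) : Q b = D a := by
  refine ext_inner_right ℂ fun v => ?_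
  calc ⟪Q b, v⟫_ℂ = ⟪b, Q v⟫_ℂ := h.fst_isSelfAdjoint.isSymmetric b v
    _ = ⟪a, D v⟫_ℂ := inner_eq_of_mem_graph h.isSelfAdjoint hab (h.mem_graph v)
    _ = ⟪D a, v⟫_ℂ := (h.snd_isSelfAdjoint.isSymmetric a v).symm

theorem snd_apply_eq_sub {a b : H} (hab : (a, b) ∈ A.graph) : D b = a - Q a := by
  refine ext_inner_right ℂ fun v => ?_
  calc ⟪D b, v⟫_ℂ = ⟪b, D v⟫_ℂ := h.snd_isSelfAdjoint.isSymmetric b v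
    _ = ⟪a, v - Q v⟫_ℂ := inner_eq_of_mem_graph h.isSelfAdjoint hab (h.sub_mem_graph v)
    _ = ⟪a - Q a, v⟫_ℂ := by
      rw [inner_sub_right, inner_sub_left]
      exact congrArg _ (h.fst_isSelfAdjoint.isSymmetric a v).symm

theorem commute : Commute Q D :=
  ContinuousLinearMap.ext fun v => h.fst_apply_eq_snd_apply (h.mem_graph v)

theorem snd_mul_snd : D * D = Q - Q * Q :=
  ContinuousLinearMap.ext fun v => h.snd_apply_eq_sub (h.mem_graph v)

theorem star_resolventOf : star (resolventOf Q D) = D + Complex.I • Q := by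
  simp [resolventOf, star_smul, h.fst_isSelfAdjoint.star_eq, h.snd_isSelfAdjoint.star_eq]

theorem star_resolventOf_mul_self : star (resolventOf Q D) * resolventOf Q D = Q := by
  have hDD := h.snd_mul_snd
  have hDQ := h.commute.eq
  rw [h.star_resolventOf, resolventOf]
  simp only [add_mul, mul_sub, smul_add, smul_mul_assoc, mul_smul_comm, smul_smul,
    Complex.I_mul_I, hDD, hDQ]
  module

theorem resolventOf_isStarNormal : IsStarNormal (resolventOf Q D) := by
  refine ⟨?_⟩
  have hDQ := h.commute.eq
  rw [commute_iff_eq, h.star_resolventOf, resolventOf]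
  simp only [add_mul, mul_add, sub_mul, mul_sub, smul_mul_assoc, mul_smul_comm, hDQ]
  module

/-- The image of `ℝ ∪ {∞}` under `t ↦ (t + i)⁻¹` is the circle `im r = -|r|²`. -/
theorem im_eq_of_mem_spectrum {r : ℂ} (hr : r ∈ spectrum ℂ (resolventOf Q D)) :
    r.im = -Complex.normSq r := by
  set R := resolventOf Q D
  have : IsStarNormal R := h.resolventOf_isStarNormal
  have hR : R - star R = (-2 * Complex.I) • (star R * R) := by
    rw [h.star_resolventOf_mul_self, h.star_resolventOf]
    simp only [R, resolventOf]
    module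
  have hcfc : cfc (fun r : ℂ => r - star r) R =
      cfc (fun r : ℂ => (-2 * Complex.I) • (star r * r)) R := by
    rw [cfc_sub _ _ R, cfc_smul _ _ R, cfc_mul _ _ R, cfc_star _ R, cfc_id' ℂ R, hR]
  have heq : r - star r = (-2 * Complex.I) • (star r * r) :=
    (cfc_eq_cfc_iff_eqOn (R := ℂ) (a := R)).1 hcfc hr
  rw [Complex.star_def, ← Complex.normSq_eq_conj_mul_self, Complex.sub_conj] at heq
  have him : 2 * r.im = -(2 * Complex.normSq r) := by simpa using congrArg Complex.im heq
  linarith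

end IsResolventPair

/-- The functions that carry the functional calculus of an unbounded self-adjoint operator:
the underlying functions of `C₀(ℝ, ℝ)`, kept unbundled so that they can be given by formulas. -/
structure VanishesAtInfty (f : ℝ → ℝ) : Prop where
  continuous : Continuous f
  tendsto : Tendsto f (Bornology.cobounded ℝ) (𝓝 0)

namespace VanishesAtInfty

variable {f g : ℝ → ℝ}

theorem add (hf : VanishesAtInfty f) (hg : VanishesAtInfty g) :
    VanishesAtInfty fun t => f t + g t :=
  ⟨hf.continuous.add hg.continuous, by simpa using hf.tendsto.add hg.tendsto⟩

theorem sub (hf : VanishesAtInfty f) (hg : VanishesAtInfty g) :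
    VanishesAtInfty fun t => f t - g t :=
  ⟨hf.continuous.sub hg.continuous, by simpa using hf.tendsto.sub hg.tendsto⟩

theorem mul (hf : VanishesAtInfty f) (hg : VanishesAtInfty g) :
    VanishesAtInfty fun t => f t * g t :=
  ⟨hf.continuous.mul hg.continuous, by simpa using hf.tendsto.mul hg.tendsto⟩

theorem const_mul (c : ℝ) (hf : VanishesAtInfty f) : VanishesAtInfty fun t => c * f t :=
  ⟨hf.continuous.const_mul c, by simpa using hf.tendsto.const_mul c⟩

theorem of_abs_le (hg : Continuous g) (hf : VanishesAtInfty f) (h : ∀ t, |g t| ≤ f t) :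
    VanishesAtInfty g :=
  ⟨hg, squeeze_zero_norm h hf.tendsto⟩

theorem comp_abs (hf : Continuous f) (h : Tendsto f atTop (𝓝 0)) :
    VanishesAtInfty fun t => f |t| :=
  ⟨hf.comp continuous_abs, h.comp tendsto_norm_cobounded_atTop⟩

end VanishesAtInfty

theorem vanishesAtInfty_inv_one_add_sq : VanishesAtInfty fun t => (1 + t ^ 2)⁻¹ := by
  have hcont : Continuous fun t : ℝ => (1 + t ^ 2)⁻¹ :=
    Continuous.inv₀ (by fun_prop) fun t => by positivity
  have htop : Tendsto (fun t : ℝ => 1 + t ^ 2) atTop atTop :=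
    tendsto_atTop_add_const_left _ _ (tendsto_pow_atTop two_ne_zero)
  simpa only [sq_abs] using VanishesAtInfty.comp_abs hcont htop.inv_tendsto_atTop

theorem vanishesAtInfty_abs_mul_inv_one_add_sq :
    VanishesAtInfty fun t => |t| * (1 + t ^ 2)⁻¹ := by
  have hcont : Continuous fun t : ℝ => t * (1 + t ^ 2)⁻¹ :=
    continuous_id.mul vanishesAtInfty_inv_one_add_sq.continuous
  have htop : Tendsto (fun t : ℝ => t⁻¹ + t) atTop atTop :=
    tendsto_inv_atTop_zero.add_atTop tendsto_id
  have hinv : ∀ᶠ t : ℝ in atTop, (t⁻¹ + t)⁻¹ = t * (1 + t ^ 2)⁻¹ := by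
    filter_upwards [eventually_gt_atTop 0] with t ht
    field_simp
  simpa only [sq_abs] using
    VanishesAtInfty.comp_abs hcont (htop.inv_tendsto_atTop.congr' hinv)

theorem vanishesAtInfty_mul_inv_one_add_sq : VanishesAtInfty fun t => t * (1 + t ^ 2)⁻¹ :=
  .of_abs_le (continuous_id.mul vanishesAtInfty_inv_one_add_sq.continuous)
    vanishesAtInfty_abs_mul_inv_one_add_sq fun t => by
      rw [abs_mul, abs_of_pos (show 0 < (1 + t ^ 2)⁻¹ by positivity)]

theorem vanishesAtInfty_pow_abs_mul_exp (n : ℕ) {x : ℝ} (hx : 0 < x) :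
    VanishesAtInfty fun t => |t| ^ n * Real.exp (-(x * |t|)) := by
  refine VanishesAtInfty.comp_abs (f := fun m => m ^ n * Real.exp (-(x * m))) (by fun_prop) ?_
  simpa only [Real.rpow_natCast, neg_mul] using
    tendsto_rpow_mul_exp_neg_mul_atTop_nhds_zero (n : ℝ) x hx

theorem vanishesAtInfty_exp {x : ℝ} (hx : 0 < x) :
    VanishesAtInfty fun t => Real.exp (-(x * |t|)) := by
  simpa using vanishesAtInfty_pow_abs_mul_exp 0 hx

theorem vanishesAtInfty_abs_mul_exp {x : ℝ} (hx : 0 < x) :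
    VanishesAtInfty fun t => |t| * Real.exp (-(x * |t|)) := by
  simpa using vanishesAtInfty_pow_abs_mul_exp 1 hx

theorem vanishesAtInfty_mul_exp {x : ℝ} (hx : 0 < x) :
    VanishesAtInfty fun t => t * Real.exp (-(x * |t|)) :=
  .of_abs_le (by fun_prop) (vanishesAtInfty_abs_mul_exp hx) fun t => by
    rw [abs_mul, Real.abs_exp]

theorem vanishesAtInfty_one_add_sq_mul_exp {x : ℝ} (hx : 0 < x) :
    VanishesAtInfty fun t => (1 + t ^ 2) * Real.exp (-(x * |t|)) := by
  simpa only [sq_abs, add_mul, one_mul] using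
    (vanishesAtInfty_exp hx).add (vanishesAtInfty_pow_abs_mul_exp 2 hx)

/-- The function `r ↦ f t` for `r = (t + i)⁻¹`, with the value `0` at `r = 0`, the image of
`t = ∞`. -/
def resolventLift (f : ℝ → ℝ) : ℂ → ℂ :=
  Function.update (fun r => (f (r⁻¹).re : ℂ)) 0 0

theorem resolventLift_zero (f : ℝ → ℝ) : resolventLift f 0 = 0 :=
  Function.update_self _ _ _

theorem resolventLift_of_ne (f : ℝ → ℝ) {r : ℂ} (hr : r ≠ 0) :
    resolventLift f r = (f (r⁻¹).re : ℂ) :=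
  Function.update_of_ne hr _ _

theorem inv_im_eq_one {r : ℂ} (hr : r.im = -Complex.normSq r) (hr0 : r ≠ 0) : (r⁻¹).im = 1 := by
  rw [Complex.inv_im, hr, neg_neg, div_self (Complex.normSq_eq_zero.not.2 hr0)]

theorem star_mul_self_eq_of_im_eq {r : ℂ} (hr : r.im = -Complex.normSq r) (hr0 : r ≠ 0) :
    star r * r = ((1 + (r⁻¹).re ^ 2)⁻¹ : ℝ) := by
  have hsq : Complex.normSq r⁻¹ = 1 + (r⁻¹).re ^ 2 := by
    rw [Complex.normSq_apply, inv_im_eq_one hr hr0]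
    ring
  rw [← hsq, Complex.normSq_inv, inv_inv, Complex.star_def, Complex.normSq_eq_conj_mul_self]

theorem add_I_mul_eq_of_im_eq {r : ℂ} (hr : r.im = -Complex.normSq r) (hr0 : r ≠ 0) :
    r + Complex.I * (star r * r) = ((r⁻¹).re * (1 + (r⁻¹).re ^ 2)⁻¹ : ℝ) := by
  have hre : (r⁻¹).re * (1 + (r⁻¹).re ^ 2)⁻¹ = r.re := by
    have hsq := star_mul_self_eq_of_im_eq hr hr0
    rw [Complex.star_def, ← Complex.normSq_eq_conj_mul_self, Complex.ofReal_inj] at hsq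
    rw [← hsq, Complex.inv_re, div_mul_cancel₀ _ (Complex.normSq_eq_zero.not.2 hr0)]
  rw [hre, Complex.star_def, ← Complex.normSq_eq_conj_mul_self]
  apply Complex.ext <;> simp [hr]

theorem VanishesAtInfty.continuousOn_resolventLift {f : ℝ → ℝ} (hf : VanishesAtInfty f) :
    ContinuousOn (resolventLift f) {r | r.im = -Complex.normSq r} := by
  refine continuousOn_update_iff.2 ⟨?_, fun _ => ?_⟩
  · have hinv : ContinuousOn (fun r : ℂ => r⁻¹) ({r | r.im = -Complex.normSq r} \ {0}) :=
      continuousOn_inv₀.mono fun r hr => hr.2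
    have hof : Continuous fun r : ℂ => (f r.re : ℂ) :=
      Complex.continuous_ofReal.comp (hf.continuous.comp Complex.continuous_re)
    exact hof.comp_continuousOn hinv
  · have hre : Tendsto (fun r : ℂ => (r⁻¹).re) (𝓝[{r | r.im = -Complex.normSq r} \ {0}] 0)
        (Bornology.cobounded ℝ) := by
      rw [← tendsto_norm_atTop_iff_cobounded]
      have hnorm := tendsto_norm_cobounded_atTop.comp (Filter.tendsto_inv₀_nhdsNE_zero (α := ℂ))
      refine tendsto_atTop_mono' _ ?_ (tendsto_atTop_add_const_right _ (-1 : ℝ)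
        (hnorm.mono_left (nhdsWithin_mono _ fun r hr => hr.2)))
      filter_upwards [self_mem_nhdsWithin] with r hr
      have := Complex.norm_le_abs_re_add_abs_im r⁻¹
      rw [inv_im_eq_one hr.1 hr.2, abs_one] at this
      rw [Function.comp_apply, Real.norm_eq_abs]
      linarith
    exact (Complex.continuous_ofReal.tendsto' 0 0 Complex.ofReal_zero).comp (hf.tendsto.comp hre)

/-- The bounded operator `f(A)`, as a function of the resolvent `(A + i)⁻¹`. -/
def spectralFun (Q D : H →L[ℂ] H) (f : ℝ → ℝ) : H →L[ℂ] H :=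
  cfc (resolventLift f) (resolventOf Q D)

theorem norm_spectralFun_le (Q D : H →L[ℂ] H) {f : ℝ → ℝ} {c : ℝ} (hc : 0 ≤ c)
    (hf : ∀ t, |f t| ≤ c) : ‖spectralFun Q D f‖ ≤ c := by
  refine norm_cfc_le hc fun r _ => ?_
  rcases eq_or_ne r 0 with rfl | hr
  · rwa [resolventLift_zero, norm_zero]
  · rw [resolventLift_of_ne f hr, Complex.norm_real]
    exact hf _

theorem isSelfAdjoint_spectralFun (Q D : H →L[ℂ] H) (f : ℝ → ℝ) :
    IsSelfAdjoint (spectralFun Q D f) := by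
  rw [IsSelfAdjoint, spectralFun, ← cfc_star]
  refine cfc_congr fun r _ => ?_
  rcases eq_or_ne r 0 with rfl | hr
  · simp [resolventLift_zero]
  · simp [resolventLift_of_ne f hr]

namespace IsResolventPair

variable {A : H →ₗ.[ℂ] H} {Q D : H →L[ℂ] H} (h : IsResolventPair A Q D)
include h

theorem continuousOn_resolventLift {f : ℝ → ℝ} (hf : VanishesAtInfty f) :
    ContinuousOn (resolventLift f) (spectrum ℂ (resolventOf Q D)) :=
  hf.continuousOn_resolventLift.mono fun _ hr => h.im_eq_of_mem_spectrum hr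

theorem spectralFun_mul {f g k : ℝ → ℝ} (hf : VanishesAtInfty f) (hg : VanishesAtInfty g)
    (hfg : ∀ t, f t * g t = k t) : spectralFun Q D f * spectralFun Q D g = spectralFun Q D k := by
  rw [spectralFun, spectralFun, ← cfc_mul _ _ _ (h.continuousOn_resolventLift hf)
    (h.continuousOn_resolventLift hg)]
  refine cfc_congr fun r _ => ?_
  rcases eq_or_ne r 0 with rfl | hr
  · simp [resolventLift_zero]
  · simp [resolventLift_of_ne _ hr, ← hfg]

theorem spectralFun_sub {f g : ℝ → ℝ} (hf : VanishesAtInfty f) (hg : VanishesAtInfty g) :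
    spectralFun Q D (fun t => f t - g t) = spectralFun Q D f - spectralFun Q D g := by
  rw [spectralFun, spectralFun, spectralFun, ← cfc_sub _ _ _ (h.continuousOn_resolventLift hf)
    (h.continuousOn_resolventLift hg)]
  refine cfc_congr fun r _ => ?_
  rcases eq_or_ne r 0 with rfl | hr
  · simp [resolventLift_zero]
  · simp [resolventLift_of_ne _ hr]

theorem spectralFun_const_mul (c : ℝ) {f : ℝ → ℝ} (hf : VanishesAtInfty f) :
    spectralFun Q D (fun t => c * f t) = c • spectralFun Q D f := by
  rw [spectralFun, spectralFun, ← cfc_smul _ _ _ (h.continuousOn_resolventLift hf)]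
  refine cfc_congr fun r _ => ?_
  rcases eq_or_ne r 0 with rfl | hr
  · simp [resolventLift_zero]
  · simp [resolventLift_of_ne _ hr]

theorem spectralFun_inv_one_add_sq : spectralFun Q D (fun t => (1 + t ^ 2)⁻¹) = Q := by
  have := h.resolventOf_isStarNormal
  have hQ : cfc (fun r : ℂ => star r * r) (resolventOf Q D) = Q := by
    rw [cfc_mul _ _ _, cfc_star, cfc_id' ℂ (resolventOf Q D), h.star_resolventOf_mul_self]
  conv_rhs => rw [← hQ]
  refine cfc_congr fun r hr => ?_
  rcases eq_or_ne r 0 with rfl | hr0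
  · simp [resolventLift_zero]
  · rw [resolventLift_of_ne _ hr0, star_mul_self_eq_of_im_eq (h.im_eq_of_mem_spectrum hr) hr0]

theorem spectralFun_mul_inv_one_add_sq : spectralFun Q D (fun t => t * (1 + t ^ 2)⁻¹) = D := by
  have := h.resolventOf_isStarNormal
  have hD : cfc (fun r : ℂ => r + Complex.I • (star r * r)) (resolventOf Q D) = D := by
    rw [cfc_add _ _ _, cfc_smul _ _ _, cfc_mul _ _ _, cfc_star, cfc_id' ℂ (resolventOf Q D),
      h.star_resolventOf_mul_self, resolventOf, sub_add_cancel]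
  conv_rhs => rw [← hD]
  refine cfc_congr fun r hr => ?_
  rcases eq_or_ne r 0 with rfl | hr0
  · simp [resolventLift_zero]
  · rw [resolventLift_of_ne _ hr0, ← add_I_mul_eq_of_im_eq (h.im_eq_of_mem_spectrum hr) hr0,
      smul_eq_mul]

theorem fst_mul_spectralFun {f k : ℝ → ℝ} (hf : VanishesAtInfty f)
    (hk : ∀ t, (1 + t ^ 2)⁻¹ * f t = k t) : Q * spectralFun Q D f = spectralFun Q D k := by
  have := h.spectralFun_mul vanishesAtInfty_inv_one_add_sq hf hk
  rwa [h.spectralFun_inv_one_add_sq] at this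

theorem snd_mul_spectralFun {f k : ℝ → ℝ} (hf : VanishesAtInfty f)
    (hk : ∀ t, t * (1 + t ^ 2)⁻¹ * f t = k t) : D * spectralFun Q D f = spectralFun Q D k := by
  have := h.spectralFun_mul vanishesAtInfty_mul_inv_one_add_sq hf hk
  rwa [h.spectralFun_mul_inv_one_add_sq] at this

theorem mem_graph_spectralFun {f g : ℝ → ℝ} (hf : VanishesAtInfty f) (hg : VanishesAtInfty g)
    (hfg : ∀ t, t * f t = g t) (k : H) :
    (spectralFun Q D f k, spectralFun Q D g k) ∈ A.graph := by
  have hDg : D * spectralFun Q D g = spectralFun Q D f - Q * spectralFun Q D f := by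
    rw [h.snd_mul_spectralFun hg (k := fun t => f t - (1 + t ^ 2)⁻¹ * f t),
      h.spectralFun_sub hf (vanishesAtInfty_inv_one_add_sq.mul hf),
      h.fst_mul_spectralFun hf fun t => rfl]
    intro t
    rw [← hfg]
    field_simp
    ring
  have hDf : D * spectralFun Q D f = Q * spectralFun Q D g := by
    rw [h.snd_mul_spectralFun hf fun t => rfl]
    refine (h.fst_mul_spectralFun hg fun t => ?_).symm
    rw [← hfg]
    ring
  have hDgk : D (spectralFun Q D g k) = spectralFun Q D f k - Q (spectralFun Q D f k) :=
    DFunLike.congr_fun hDg k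
  have hDfk : D (spectralFun Q D f k) = Q (spectralFun Q D g k) := DFunLike.congr_fun hDf k
  have hsum := A.graph.add_mem (h.mem_graph (spectralFun Q D f k))
    (h.sub_mem_graph (spectralFun Q D g k))
  rwa [Prod.mk_add_mk, hDgk, hDfk, add_sub_cancel, add_sub_cancel] at hsum

theorem spectralFun_apply_of_mem_graph {f g : ℝ → ℝ} (hf : VanishesAtInfty f)
    (hg : VanishesAtInfty g) (hfg : ∀ t, t * f t = g t) {a b : H} (hab : (a, b) ∈ A.graph) :
    spectralFun Q D f b = spectralFun Q D g a := by
  refine ext_inner_right ℂ fun v => ?_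
  calc ⟪spectralFun Q D f b, v⟫_ℂ = ⟪b, spectralFun Q D f v⟫_ℂ :=
        (isSelfAdjoint_spectralFun Q D f).isSymmetric b v
    _ = ⟪a, spectralFun Q D g v⟫_ℂ :=
        inner_eq_of_mem_graph h.isSelfAdjoint hab (h.mem_graph_spectralFun hf hg hfg v)
    _ = ⟪spectralFun Q D g a, v⟫_ℂ := ((isSelfAdjoint_spectralFun Q D g).isSymmetric a v).symm

end IsResolventPair

theorem abs_exp_neg_sub_le {a b c : ℝ} (ha : c ≤ a) (hb : c ≤ b) :
    |Real.exp (-b) - Real.exp (-a) + (b - a) * Real.exp (-a)| ≤ (b - a) ^ 2 * Real.exp (-c) := by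
  have tangent (u v : ℝ) : Real.exp (-u) * (1 + (u - v)) ≤ Real.exp (-v) := by
    calc Real.exp (-u) * (1 + (u - v)) ≤ Real.exp (-u) * Real.exp (u - v) := by
          gcongr
          linarith [Real.add_one_le_exp (u - v)]
      _ = Real.exp (-v) := by rw [← Real.exp_add]; ring_nf
  have hab := tangent a b
  have hba := tangent b a
  have hac : Real.exp (-a) ≤ Real.exp (-c) := Real.exp_le_exp.2 (neg_le_neg ha)
  have hbc : Real.exp (-b) ≤ Real.exp (-c) := Real.exp_le_exp.2 (neg_le_neg hb)
  rw [abs_of_nonneg (by linarith)]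
  rcases le_total a b with h | h
  · have := mul_le_mul_of_nonneg_left hac (sq_nonneg (b - a))
    nlinarith [mul_le_mul_of_nonneg_left hab (sub_nonneg.2 h)]
  · have := mul_le_mul_of_nonneg_left hbc (sq_nonneg (b - a))
    nlinarith [mul_le_mul_of_nonneg_left hba (sub_nonneg.2 h)]

theorem sq_mul_exp_neg_le {x : ℝ} (hx : 0 < x) {m : ℝ} (hm : 0 ≤ m) :
    m ^ 2 * Real.exp (-(x * m)) ≤ 2 / x ^ 2 := by
  have := Real.quadratic_le_exp_of_nonneg (mul_nonneg hx.le hm)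
  rw [Real.exp_neg, mul_inv_le_iff₀ (Real.exp_pos _), div_mul_eq_mul_div,
    le_div_iff₀ (by positivity)]
  nlinarith [mul_nonneg hx.le hm]

theorem mul_exp_neg_le_inv {x : ℝ} (hx : 0 < x) (m : ℝ) :
    m * Real.exp (-(x * m)) ≤ x⁻¹ := by
  rw [Real.exp_neg, mul_inv_le_iff₀ (Real.exp_pos _), inv_mul_eq_div, le_div_iff₀ hx]
  linarith [Real.add_one_le_exp (x * m)]

/-- `exp (-x|A|)`. Only `x > 0` is meaningful, since the functional calculus is restricted to
functions vanishing at infinity. -/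
def absSemigroup (Q D : H →L[ℂ] H) (x : ℝ) : H →L[ℂ] H :=
  spectralFun Q D fun t => Real.exp (-(x * |t|))

/-- `|A| exp (-x|A|)` for `x > 0`, minus the derivative of the semigroup. -/
def absMulSemigroup (Q D : H →L[ℂ] H) (x : ℝ) : H →L[ℂ] H :=
  spectralFun Q D fun t => |t| * Real.exp (-(x * |t|))

theorem norm_absSemigroup_le_one (Q D : H →L[ℂ] H) {x : ℝ} (hx : 0 < x) :
    ‖absSemigroup Q D x‖ ≤ 1 := by
  refine norm_spectralFun_le Q D zero_le_one fun t => ?_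
  rw [Real.abs_exp]
  exact Real.exp_le_one_iff.2 (neg_nonpos.2 (by positivity))

theorem norm_absSemigroup_apply_le (Q D : H →L[ℂ] H) {x : ℝ} (hx : 0 < x) (k : H) :
    ‖absSemigroup Q D x k‖ ≤ ‖k‖ := by
  simpa using (absSemigroup Q D x).le_of_opNorm_le (norm_absSemigroup_le_one Q D hx) k

theorem tendsto_apply_of_dense {𝕜 E F ι : Type*} [NontriviallyNormedField 𝕜]
    [NormedAddCommGroup E] [NormedSpace 𝕜 E] [NormedAddCommGroup F] [NormedSpace 𝕜 F]
    {l : Filter ι} {T : ι → E →L[𝕜] F} {S : E →L[𝕜] F} {C : ℝ} {s : Set E}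
    (hT : ∀ᶠ i in l, ‖T i‖ ≤ C) (hs : Dense s)
    (h : ∀ y ∈ s, Tendsto (T · y) l (𝓝 (S y))) (k : E) : Tendsto (T · k) l (𝓝 (S k)) := by
  have hF : Equicontinuous fun (i : {i // ‖T i‖ ≤ C}) => (T i : E → F) :=
    (((NormedSpace.equicontinuous_TFAE fun i : {i // ‖T i‖ ≤ C} => T i).out 5 1 :
      (∃ C', ∀ i : {i // ‖T i‖ ≤ C}, ‖T i‖ ≤ C') ↔ _)).1 ⟨C, fun i => i.2⟩
  rw [← tendsto_comap'_iff (i := (Subtype.val : {i // ‖T i‖ ≤ C} → ι)) (by simpa)]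
  exact (hF k).tendsto_of_mem_closure S.continuous.continuousWithinAt
    (fun y hy => (h y hy).comp tendsto_comap) (hs k)

namespace IsResolventPair

variable {A : H →ₗ.[ℂ] H} {Q D : H →L[ℂ] H} (h : IsResolventPair A Q D)
include h

theorem norm_absSemigroup_sub_le {x z : ℝ} (hx : 0 < x) (hz : x / 2 < z) :
    ‖absSemigroup Q D z - absSemigroup Q D x - (z - x) • -absMulSemigroup Q D x‖ ≤
      (z - x) ^ 2 * (2 / (x / 2) ^ 2) := by
  have hx₂ := half_pos hx
  have hez := vanishesAtInfty_exp (hx₂.trans hz)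
  have hex := vanishesAtInfty_exp hx
  have hmx := vanishesAtInfty_abs_mul_exp hx
  have hsub : absSemigroup Q D z - absSemigroup Q D x - (z - x) • -absMulSemigroup Q D x =
      spectralFun Q D fun t => Real.exp (-(z * |t|)) - Real.exp (-(x * |t|)) -
        -(z - x) * (|t| * Real.exp (-(x * |t|))) := by
    rw [h.spectralFun_sub (hez.sub hex) (hmx.const_mul _), h.spectralFun_sub hez hex,
      h.spectralFun_const_mul _ hmx, smul_neg, neg_smul]
    rfl
  rw [hsub]
  refine norm_spectralFun_le Q D (by positivity) fun t => ?_
  calc |Real.exp (-(z * |t|)) - Real.exp (-(x * |t|)) - -(z - x) * (|t| * Real.exp (-(x * |t|)))|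
      = |Real.exp (-(z * |t|)) - Real.exp (-(x * |t|)) +
          (z * |t| - x * |t|) * Real.exp (-(x * |t|))| := by ring_nf
    _ ≤ (z * |t| - x * |t|) ^ 2 * Real.exp (-(x / 2 * |t|)) :=
      abs_exp_neg_sub_le (by gcongr; linarith) (by gcongr)
    _ = (z - x) ^ 2 * (|t| ^ 2 * Real.exp (-(x / 2 * |t|))) := by ring
    _ ≤ (z - x) ^ 2 * (2 / (x / 2) ^ 2) := by
      gcongr
      exact sq_mul_exp_neg_le hx₂ (abs_nonneg t)

theorem hasDerivAt_absSemigroup {x : ℝ} (hx : 0 < x) :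
    HasDerivAt (absSemigroup Q D) (-absMulSemigroup Q D x) x := by
  rw [hasDerivAt_iff_isLittleO]
  refine Asymptotics.IsBigO.trans_isLittleO (g := fun z => ‖z - x‖ ^ 2) ?_
    (Asymptotics.isLittleO_pow_sub_sub x one_lt_two)
  refine Asymptotics.IsBigO.of_bound (2 / (x / 2) ^ 2) ?_
  filter_upwards [Ioi_mem_nhds (half_lt_self hx)] with z hz
  rw [mul_comm, norm_pow, norm_norm, Real.norm_eq_abs, sq_abs]
  exact h.norm_absSemigroup_sub_le hx hz

theorem absMulSemigroup_mul_absSemigroup {x y : ℝ} (hx : 0 < x) (hy : 0 < y) :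
    absMulSemigroup Q D x * absSemigroup Q D y = absMulSemigroup Q D (x + y) := by
  refine h.spectralFun_mul (vanishesAtInfty_abs_mul_exp hx) (vanishesAtInfty_exp hy) fun t => ?_
  rw [mul_assoc, ← Real.exp_add]
  ring_nf

theorem continuousOn_absMulSemigroup : ContinuousOn (absMulSemigroup Q D) (Set.Ioi 0) := by
  intro x hx
  have hx₂ : 0 < x / 2 := half_pos hx
  have hT : ContinuousAt (absSemigroup Q D) (x - x / 2) := by
    rw [sub_half]
    exact (h.hasDerivAt_absSemigroup hx₂).continuousAt
  have hmul : ContinuousAt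
      (fun z => absMulSemigroup Q D (x / 2) * absSemigroup Q D (z - x / 2)) x :=
    continuousAt_const.mul (ContinuousAt.comp (f := fun z => z - x / 2) hT (by fun_prop))
  refine (hmul.congr ?_).continuousWithinAt
  filter_upwards [Ioi_mem_nhds (half_lt_self hx)] with z hz
  rw [h.absMulSemigroup_mul_absSemigroup hx₂ (sub_pos.2 hz), add_sub_cancel]

theorem denseRange_fst : DenseRange Q := by
  have hker : Q.ker = ⊥ := by
    refine LinearMap.ker_eq_bot'.2 fun k hk => ?_
    have hQk : Q k = 0 := hk
    have hDk : D k = 0 := A.graph_fst_eq_zero_snd (h.mem_graph k) hQk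
    simpa [hQk] using A.graph_fst_eq_zero_snd (h.sub_mem_graph k) hDk
  have hrange : Q.rangeᗮ = ⊥ := by rw [Q.orthogonal_range, h.fst_isSelfAdjoint.adjoint_eq, hker]
  exact Submodule.dense_iff_topologicalClosure_eq_top.2
    (Submodule.topologicalClosure_eq_top_iff.2 hrange)

theorem norm_absSemigroup_mul_fst_sub_le {x : ℝ} (hx : 0 < x) :
    ‖absSemigroup Q D x * Q - Q‖ ≤ x := by
  have hinv := vanishesAtInfty_inv_one_add_sq
  have hsub : absSemigroup Q D x * Q - Q = spectralFun Q D fun t =>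
      Real.exp (-(x * |t|)) * (1 + t ^ 2)⁻¹ - (1 + t ^ 2)⁻¹ := by
    rw [h.spectralFun_sub ((vanishesAtInfty_exp hx).mul hinv) hinv,
      ← h.spectralFun_mul (vanishesAtInfty_exp hx) hinv fun t => rfl,
      h.spectralFun_inv_one_add_sq, absSemigroup]
  rw [hsub]
  refine norm_spectralFun_le Q D hx.le fun t => ?_
  have hexp : Real.exp (-(x * |t|)) ≤ 1 := Real.exp_le_one_iff.2 (neg_nonpos.2 (by positivity))
  have htan := Real.add_one_le_exp (-(x * |t|))
  calc |Real.exp (-(x * |t|)) * (1 + t ^ 2)⁻¹ - (1 + t ^ 2)⁻¹|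
      = (1 - Real.exp (-(x * |t|))) / (1 + t ^ 2) := by
        rw [abs_of_nonpos (by nlinarith [show 0 < (1 + t ^ 2)⁻¹ by positivity])]
        ring
    _ ≤ x := by
      rw [div_le_iff₀ (by positivity)]
      nlinarith [sq_nonneg (|t| - 1), sq_abs t]

theorem tendsto_absSemigroup_zero (k : H) :
    Tendsto (absSemigroup Q D · k) (𝓝[>] 0) (𝓝 k) := by
  refine tendsto_apply_of_dense (S := ContinuousLinearMap.id ℂ H) (C := 1) ?_ h.denseRange_fst ?_ k
  · filter_upwards [self_mem_nhdsWithin] with x hx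
    exact norm_absSemigroup_le_one Q D hx
  · rintro _ ⟨j, rfl⟩
    refine tendsto_iff_norm_sub_tendsto_zero.2 (squeeze_zero' (.of_forall fun _ => norm_nonneg _)
      (g := fun x => x * ‖j‖) ?_ ?_)
    · filter_upwards [self_mem_nhdsWithin] with x hx
      exact (absSemigroup Q D x * Q - Q).le_of_opNorm_le (h.norm_absSemigroup_mul_fst_sub_le hx) j
    · exact ((continuous_mul_const ‖j‖).tendsto' 0 0 (zero_mul _)).mono_left nhdsWithin_le_nhds

theorem dense_setOf_snd_mem_graph (hinj : ∀ a, (a, (0 : H)) ∈ A.graph → a = 0) :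
    Dense {b | ∃ a, (a, b) ∈ A.graph} := by
  have hrange : (A.graph.map (LinearMap.snd ℂ H H))ᗮ = ⊥ := by
    refine (Submodule.eq_bot_iff _).2 fun k hk => hinj k ?_
    refine mem_graph_of_forall_inner_eq h.isSelfAdjoint fun a b hab => ?_
    rw [inner_zero_right]
    exact (Submodule.mem_orthogonal _ _).1 hk b ⟨(a, b), hab, rfl⟩
  convert Submodule.dense_iff_topologicalClosure_eq_top.2
    (Submodule.topologicalClosure_eq_top_iff.2 hrange) using 1
  ext b
  simp

theorem tendsto_absSemigroup_atTop (hinj : ∀ a, (a, (0 : H)) ∈ A.graph → a = 0) (k : H) :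
    Tendsto (absSemigroup Q D · k) atTop (𝓝 0) := by
  refine tendsto_apply_of_dense (S := 0) (C := 1) ?_ (h.dense_setOf_snd_mem_graph hinj) ?_ k
  · filter_upwards [eventually_gt_atTop 0] with x hx
    exact norm_absSemigroup_le_one Q D hx
  · rintro b ⟨a, hab⟩
    refine squeeze_zero_norm' (a := fun x => x⁻¹ * ‖a‖) ?_ ?_
    · filter_upwards [eventually_gt_atTop 0] with x hx
      have hA := h.spectralFun_apply_of_mem_graph (vanishesAtInfty_exp hx)
        (vanishesAtInfty_mul_exp hx) (fun t => rfl) hab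
      rw [absSemigroup, hA]
      refine ContinuousLinearMap.le_of_opNorm_le _
        (norm_spectralFun_le Q D (inv_nonneg.2 hx.le) fun t => ?_) a
      rw [abs_mul, Real.abs_exp]
      exact mul_exp_neg_le_inv hx |t|
    · simpa using tendsto_inv_atTop_zero.mul_const ‖a‖

end IsResolventPair

/-- The symbol whose zero set is the half-line `{t | s * t ≥ 0}`, for `s = ±1`. -/
def halfLineSymbol (s t : ℝ) : ℝ := (|t| - s * t) * (1 + t ^ 2)⁻¹

/-- The spectral subspace of `A` for the half-line `{t | s * t ≥ 0}`, for `s = ±1`. -/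
def halfLineSubspace (Q D : H →L[ℂ] H) (s : ℝ) : Submodule ℂ H :=
  (spectralFun Q D (halfLineSymbol s)).ker

theorem vanishesAtInfty_halfLineSymbol (s : ℝ) : VanishesAtInfty (halfLineSymbol s) := by
  convert vanishesAtInfty_abs_mul_inv_one_add_sq.sub
    (vanishesAtInfty_mul_inv_one_add_sq.const_mul s) using 2 with t
  rw [halfLineSymbol]
  ring

theorem isClosed_halfLineSubspace (Q D : H →L[ℂ] H) (s : ℝ) :
    IsClosed (halfLineSubspace Q D s : Set H) :=
  (spectralFun Q D (halfLineSymbol s)).isClosed_ker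

/-- The curve `x ↦ exp (-x|A|) k`, with its limit `k` as value at `x = 0`. -/
def absOrbit (Q D : H →L[ℂ] H) (k : H) : ℝ → H :=
  Function.update (fun x => absSemigroup Q D x k) 0 k

theorem absOrbit_zero (Q D : H →L[ℂ] H) (k : H) : absOrbit Q D k 0 = k :=
  Function.update_self _ _ _

theorem absOrbit_of_pos (Q D : H →L[ℂ] H) (k : H) {x : ℝ} (hx : 0 < x) :
    absOrbit Q D k x = absSemigroup Q D x k :=
  Function.update_of_ne hx.ne' _ _

theorem norm_absOrbit_le (Q D : H →L[ℂ] H) (k : H) {x : ℝ} (hx : 0 ≤ x) :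
    ‖absOrbit Q D k x‖ ≤ ‖k‖ := by
  rcases hx.eq_or_lt with rfl | hx
  · rw [absOrbit_zero]
  · rw [absOrbit_of_pos Q D k hx]
    exact norm_absSemigroup_apply_le Q D hx k

omit [CompleteSpace H] in
theorem isStrongSolutionOn_zero_iff {B : H →ₗ.[ℂ] H} {ψ : ℝ → H} {s : Set ℝ} :
    IsStrongSolutionOn B (fun _ => 0) ψ s ↔ ∃ ψ' : ℝ → H, ContinuousOn ψ' s ∧
      ∀ x ∈ s, HasDerivAt ψ (ψ' x) x ∧ (ψ x, -ψ' x) ∈ B.graph := by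
  refine exists_congr fun ψ' => and_congr_right fun _ => forall₂_congr fun x _ =>
    and_congr_right fun _ => ?_
  simp only [add_zero, ← neg_eq_iff_eq_neg]
  exact ⟨fun ⟨hx, h⟩ => (LinearPMap.image_iff hx).1 h, fun h =>
    ⟨LinearPMap.mem_domain_of_mem_graph h, (LinearPMap.image_iff _).2 h⟩⟩

theorem hasDerivAt_complex_clm_apply {E F : Type*} [NormedAddCommGroup E] [NormedSpace ℂ E]
    [NormedAddCommGroup F] [NormedSpace ℂ F] {T : ℝ → E →L[ℂ] F} {T' : E →L[ℂ] F} {u : ℝ → E}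
    {u' : E} {x : ℝ} (hT : HasDerivAt T T' x) (hu : HasDerivAt u u' x) :
    HasDerivAt (fun y => T y (u y)) (T' (u x) + T x u') x :=
  ((ContinuousLinearMap.restrictScalarsL ℂ E F ℝ ℝ).hasFDerivAt.comp_hasDerivAt x hT).clm_apply hu

theorem eq_zero_of_hasDerivAt_zero_of_tendsto {E : Type*} [NormedAddCommGroup E] [NormedSpace ℝ E]
    {f : ℝ → E} (hf : ∀ x > 0, HasDerivAt f 0 x) (hlim : Tendsto f atTop (𝓝 0)) {x : ℝ}
    (hx : 0 < x) : f x = 0 := by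
  refine tendsto_nhds_unique (tendsto_const_nhds.congr' ?_) hlim
  filter_upwards [eventually_gt_atTop 0] with y hy
  exact isOpen_Ioi.is_const_of_deriv_eq_zero isPreconnected_Ioi
    (fun z hz => (hf z hz).differentiableAt.differentiableWithinAt) (fun z hz => (hf z hz).deriv)
    hx hy

namespace IsResolventPair

variable {A : H →ₗ.[ℂ] H} {Q D : H →L[ℂ] H} (h : IsResolventPair A Q D)
include h

theorem hasDerivAt_absOrbit (k : H) {x : ℝ} (hx : 0 < x) :
    HasDerivAt (absOrbit Q D k) (-absMulSemigroup Q D x k) x := by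
  have hT := hasDerivAt_complex_clm_apply (h.hasDerivAt_absSemigroup hx) (hasDerivAt_const x k)
  rw [map_zero, add_zero] at hT
  refine hT.congr_of_eventuallyEq ?_
  filter_upwards [Ioi_mem_nhds hx] with y hy
  exact absOrbit_of_pos Q D k hy

theorem continuousOn_absOrbit (k : H) : ContinuousOn (absOrbit Q D k) (Set.Ici 0) := by
  refine continuousOn_update_iff.2 ?_
  rw [Set.Ici_sdiff_left]
  refine ⟨fun x hx => ?_, fun _ => h.tendsto_absSemigroup_zero k⟩
  exact ((hasDerivAt_complex_clm_apply (h.hasDerivAt_absSemigroup hx)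
    (hasDerivAt_const x k)).continuousAt).continuousWithinAt

theorem tendsto_absOrbit_atTop (hinj : ∀ a, (a, (0 : H)) ∈ A.graph → a = 0) (k : H) :
    Tendsto (absOrbit Q D k) atTop (𝓝 0) := by
  refine (h.tendsto_absSemigroup_atTop hinj k).congr' ?_
  filter_upwards [eventually_gt_atTop 0] with x hx
  exact (absOrbit_of_pos Q D k hx).symm

theorem absOrbit_mem_graph {s : ℝ} (hs : s * s = 1) {k : H} (hk : k ∈ halfLineSubspace Q D s)
    {x : ℝ} (hx : 0 < x) : (absOrbit Q D k x, s • absMulSemigroup Q D x k) ∈ A.graph := by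
  have hexp := vanishesAtInfty_mul_exp hx
  have hmul : spectralFun Q D (fun t => (1 + t ^ 2) * Real.exp (-(x * |t|))) *
      spectralFun Q D (halfLineSymbol s) =
        absMulSemigroup Q D x - s • spectralFun Q D fun t => t * Real.exp (-(x * |t|)) := by
    rw [h.spectralFun_mul (vanishesAtInfty_one_add_sq_mul_exp hx)
      (vanishesAtInfty_halfLineSymbol s) fun t => ?_, h.spectralFun_sub
        (vanishesAtInfty_abs_mul_exp hx) (hexp.const_mul s), h.spectralFun_const_mul s hexp]
    · rfl
    · rw [halfLineSymbol]
      field_simp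
  have hk₀ : spectralFun Q D (halfLineSymbol s) k = 0 := hk
  have habs : absMulSemigroup Q D x k =
      s • spectralFun Q D (fun t => t * Real.exp (-(x * |t|))) k := by
    refine sub_eq_zero.1 ((DFunLike.congr_fun hmul k).symm.trans ?_)
    exact (congrArg (spectralFun Q D _) hk₀).trans (map_zero _)
  rw [habs, smul_smul, hs, one_smul, absOrbit_of_pos Q D k hx]
  exact h.mem_graph_spectralFun (vanishesAtInfty_exp hx) hexp (fun t => rfl) k

theorem isStrongSolutionOn_absOrbit {k : H} (hk : k ∈ halfLineSubspace Q D 1) :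
    IsStrongSolutionOn A (fun _ => 0) (absOrbit Q D k) (Set.Ioi 0) := by
  refine isStrongSolutionOn_zero_iff.2 ⟨fun x => -absMulSemigroup Q D x k,
    (h.continuousOn_absMulSemigroup.clm_apply continuousOn_const).neg,
    fun x hx => ⟨h.hasDerivAt_absOrbit k hx, ?_⟩⟩
  simpa only [neg_neg, one_smul] using h.absOrbit_mem_graph (one_mul 1) hk hx

theorem exists_add_eq_halfLineSubspace (k : H) :
    ∃ k₁ ∈ halfLineSubspace Q D 1, ∃ k₂ ∈ halfLineSubspace Q D (-1), k₁ + k₂ = k := by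
  set N := spectralFun Q D (halfLineSymbol 1)
  set M := spectralFun Q D (halfLineSymbol (-1))
  have hMN : M * N = 0 := by
    rw [h.spectralFun_mul (vanishesAtInfty_halfLineSymbol _) (vanishesAtInfty_halfLineSymbol _)
      (k := fun _ => 0), ← norm_le_zero_iff]
    · exact norm_spectralFun_le Q D le_rfl fun _ => abs_zero.le
    · intro t
      simp only [halfLineSymbol]
      linear_combination ((1 + t ^ 2)⁻¹) ^ 2 * sq_abs t
  have hrange : N.range.topologicalClosure ≤ M.ker := by
    refine Submodule.topologicalClosure_minimal _ ?_ M.isClosed_ker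
    rintro _ ⟨v, rfl⟩
    exact DFunLike.congr_fun hMN v
  have : CompleteSpace N.ker := N.isClosed_ker.completeSpace_coe
  obtain ⟨k₁, hk₁, k₂, hk₂, rfl⟩ := N.ker.exists_add_mem_mem_orthogonal k
  rw [N.orthogonal_ker, (isSelfAdjoint_spectralFun Q D _).adjoint_eq] at hk₂
  exact ⟨k₁, hk₁, k₂, hrange hk₂, rfl⟩

/-- `A = -|A|` on the spectral subspace of the negative half-line. -/
theorem absSemigroup_halfLine_apply {x : ℝ} (hx : 0 < x) {a b : H} (hab : (a, b) ∈ A.graph) :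
    absSemigroup Q D x (spectralFun Q D (halfLineSymbol 1) b) =
      -absMulSemigroup Q D x (spectralFun Q D (halfLineSymbol 1) a) := by
  have hn := vanishesAtInfty_halfLineSymbol 1
  have he := vanishesAtInfty_exp hx
  have hm := vanishesAtInfty_abs_mul_exp hx
  have hTN := h.spectralFun_mul he hn fun t => rfl
  have hMN := h.spectralFun_mul hm hn fun t => rfl
  have hb := h.spectralFun_apply_of_mem_graph (he.mul hn) ((hm.mul hn).const_mul (-1)) (fun t => by
    simp only [halfLineSymbol]
    linear_combination (Real.exp (-(x * |t|)) * (1 + t ^ 2)⁻¹) * sq_abs t) hab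
  rw [h.spectralFun_const_mul _ (hm.mul hn), ← hTN, ← hMN, neg_one_smul] at hb
  exact hb

theorem norm_absSemigroup_mul_halfLine_le {x : ℝ} (hx : 0 < x) :
    ‖absSemigroup Q D x * spectralFun Q D (halfLineSymbol 1)‖ ≤ 2 * x⁻¹ := by
  rw [absSemigroup, h.spectralFun_mul (vanishesAtInfty_exp hx) (vanishesAtInfty_halfLineSymbol 1)
    fun t => rfl]
  refine norm_spectralFun_le Q D (by positivity) fun t => ?_
  have hn : |halfLineSymbol 1 t| ≤ 2 * |t| := by
    have hsub : 0 ≤ |t| - t := sub_nonneg.2 (le_abs_self t)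
    have hinv : (1 + t ^ 2)⁻¹ ≤ 1 := inv_le_one_of_one_le₀ (by nlinarith)
    rw [halfLineSymbol, one_mul, abs_of_nonneg (by positivity)]
    linarith [mul_le_of_le_one_right hsub hinv, neg_abs_le t]
  calc |Real.exp (-(x * |t|)) * halfLineSymbol 1 t|
      = Real.exp (-(x * |t|)) * |halfLineSymbol 1 t| := by rw [abs_mul, Real.abs_exp]
    _ ≤ Real.exp (-(x * |t|)) * (2 * |t|) := by gcongr
    _ = 2 * (|t| * Real.exp (-(x * |t|))) := by ring
    _ ≤ 2 * x⁻¹ := by gcongr; exact mul_exp_neg_le_inv hx |t|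

/-- On the spectral subspace of the negative half-line a solution of `u' = -A u` grows exactly as
fast as `exp (-x|A|)` decays, so that `exp (-x|A|) u (y + x)` is constant there. -/
theorem absSemigroup_halfLine_eq_zero {u : ℝ → H} {C : ℝ}
    (hu : IsStrongSolutionOn A (fun _ => 0) u (Set.Ioi 0)) (hC : ∀ x > 0, ‖u x‖ ≤ C) {x y : ℝ}
    (hx : 0 < x) (hy : 0 ≤ y) :
    absSemigroup Q D x (spectralFun Q D (halfLineSymbol 1) (u (y + x))) = 0 := by
  set N := spectralFun Q D (halfLineSymbol 1)
  obtain ⟨u', -, hu⟩ := isStrongSolutionOn_zero_iff.1 hu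
  refine eq_zero_of_hasDerivAt_zero_of_tendsto
    (f := fun x => absSemigroup Q D x (N (u (y + x)))) (fun x hx => ?_) ?_ hx
  · obtain ⟨hder, hgraph⟩ := hu (y + x) (add_pos_of_nonneg_of_pos hy hx)
    have hNu : HasDerivAt (fun x => N (u (y + x))) (N (u' (y + x))) x :=
      (N.restrictScalars ℝ).hasFDerivAt.comp_hasDerivAt x (hder.comp_const_add y x)
    refine (hasDerivAt_complex_clm_apply (h.hasDerivAt_absSemigroup hx) hNu).congr_deriv ?_
    have hcancel := h.absSemigroup_halfLine_apply hx hgraph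
    rw [map_neg, map_neg, neg_inj] at hcancel
    rw [hcancel]
    exact neg_add_cancel _
  · refine squeeze_zero_norm' (a := fun x => 2 * x⁻¹ * C) ?_ ?_
    · filter_upwards [eventually_gt_atTop 0] with x hx
      exact (absSemigroup Q D x * N).le_of_opNorm_le_of_le
        (h.norm_absSemigroup_mul_halfLine_le hx) (hC _ (add_pos_of_nonneg_of_pos hy hx))
    · simpa using (tendsto_inv_atTop_zero.const_mul 2).mul_const C

theorem mem_halfLineSubspace_of_bounded {u : ℝ → H} {C : ℝ}
    (hu : IsStrongSolutionOn A (fun _ => 0) u (Set.Ioi 0)) (hC : ∀ x > 0, ‖u x‖ ≤ C) {z : ℝ}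
    (hz : 0 < z) : u z ∈ halfLineSubspace Q D 1 := by
  refine tendsto_nhds_unique (h.tendsto_absSemigroup_zero _) (tendsto_const_nhds.congr' ?_)
  filter_upwards [Ioo_mem_nhdsGT hz] with x hx
  have := h.absSemigroup_halfLine_eq_zero hu hC hx.1 (sub_nonneg.2 hx.2.le)
  rwa [sub_add_cancel, eq_comm] at this

end IsResolventPair

theorem hasDerivAt_reApplyInnerSelf {G : H →L[ℂ] H} (hG : IsSelfAdjoint G) {u : ℝ → H} {u' : H}
    {x : ℝ} (hu : HasDerivAt u u' x) :
    HasDerivAt (fun y => G.reApplyInnerSelf (u y)) (2 * (⟪G u', u x⟫_ℂ).re) x := by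
  have hGu : HasDerivAt (fun y => G (u y)) (G u') x :=
    (G.restrictScalars ℝ).hasFDerivAt.comp_hasDerivAt x hu
  refine (Complex.reCLM.hasFDerivAt.comp_hasDerivAt x (hGu.inner ℂ hu)).congr_deriv ?_
  have hsymm : ⟪G (u x), u'⟫_ℂ = ⟪u x, G u'⟫_ℂ := hG.isSymmetric (u x) u'
  rw [Complex.reCLM_apply, Complex.add_re, hsymm, ← inner_conj_symm (u x), Complex.conj_re]
  ring

theorem antitoneOn_reApplyInnerSelf {G : H →L[ℂ] H} (hG : IsSelfAdjoint G) {u u' : ℝ → H}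
    (hc : ContinuousOn u (Set.Ici 0)) (hu : ∀ x > 0, HasDerivAt u (u' x) x)
    (hle : ∀ x > 0, (⟪G (u' x), u x⟫_ℂ).re ≤ 0) :
    AntitoneOn (fun x => G.reApplyInnerSelf (u x)) (Set.Ici 0) := by
  refine antitoneOn_of_hasDerivWithinAt_nonpos (convex_Ici 0)
    (f' := fun x => 2 * (⟪G (u' x), u x⟫_ℂ).re)
    (G.reApplyInnerSelf_continuous.comp_continuousOn hc) ?_ ?_ <;> rw [interior_Ici]
  · exact fun x hx => (hasDerivAt_reApplyInnerSelf hG (hu x hx)).hasDerivWithinAt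
  · exact fun x hx => by linarith [hle x hx]

omit [CompleteSpace H] in
theorem IsPositivePMap.re_inner_pos {G : H →L[ℂ] H} {A : H →ₗ.[ℂ] H}
    (hG : IsPositivePMap (pmapComp G A)) {a b : H} (hab : (a, b) ∈ A.graph) (ha : a ≠ 0) :
    0 < (⟪G b, a⟫_ℂ).re := by
  obtain ⟨w, rfl, rfl⟩ := A.mem_graph_iff.1 hab
  exact (Complex.pos_iff.1 (hG w ha)).1

omit [CompleteSpace H] in
theorem IsPositivePMap.re_inner_nonneg {G : H →L[ℂ] H} {A : H →ₗ.[ℂ] H}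
    (hG : IsPositivePMap (pmapComp G A)) {a b : H} (hab : (a, b) ∈ A.graph) :
    0 ≤ (⟪G b, a⟫_ℂ).re := by
  rcases eq_or_ne a 0 with rfl | ha
  · rw [inner_zero_right, Complex.zero_re]
  · exact (hG.re_inner_pos hab ha).le

omit [CompleteSpace H] in
theorem IsPositivePMap.eq_zero_of_mem_graph {G : H →L[ℂ] H} {A : H →ₗ.[ℂ] H}
    (hG : IsPositivePMap (pmapComp G A)) {a : H} (ha : (a, (0 : H)) ∈ A.graph) : a = 0 := by
  by_contra hne
  simpa only [map_zero, inner_zero_left, Complex.zero_re, lt_irrefl] using hG.re_inner_pos ha hne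

namespace IsResolventPair

variable {A : H →ₗ.[ℂ] H} {Q D : H →L[ℂ] H} (h : IsResolventPair A Q D)
include h

theorem mul_reApplyInnerSelf_nonneg {G : H →L[ℂ] H} (hGsa : IsSelfAdjoint G)
    (hG : IsPositivePMap (pmapComp G A)) {s : ℝ} (hs : s * s = 1) {k : H}
    (hk : k ∈ halfLineSubspace Q D s) : 0 ≤ s * G.reApplyInnerSelf k := by
  have hsmul (v w : H) : (⟪(s • G) v, w⟫_ℂ).re = s * (⟪G v, w⟫_ℂ).re := by
    rw [smul_apply, RCLike.real_smul_eq_coe_smul (K := ℂ), inner_smul_left, RCLike.conj_ofReal]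
    exact Complex.re_ofReal_mul _ _
  have hanti := antitoneOn_reApplyInnerSelf ((IsSelfAdjoint.all s).smul hGsa)
    (h.continuousOn_absOrbit k) (fun x hx => h.hasDerivAt_absOrbit k hx) fun x hx => by
      have hAG := hG.re_inner_nonneg (h.absOrbit_mem_graph hs hk hx)
      rw [map_neg, inner_neg_left, Complex.neg_re, neg_nonpos]
      rwa [ContinuousLinearMap.map_smul_of_tower] at hAG
  have hlim : Tendsto (fun x => (s • G).reApplyInnerSelf (absOrbit Q D k x)) atTop (𝓝 0) := by
    have hcont := (s • G).reApplyInnerSelf_continuous.tendsto 0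
    rw [ContinuousLinearMap.reApplyInnerSelf_apply, inner_zero_right, map_zero] at hcont
    exact hcont.comp (h.tendsto_absOrbit_atTop (fun a => hG.eq_zero_of_mem_graph) k)
  suffices 0 ≤ (s • G).reApplyInnerSelf (absOrbit Q D k 0) by
    rw [absOrbit_zero] at this
    exact this.trans_eq (hsmul k k)
  refine le_of_tendsto hlim ?_
  filter_upwards [eventually_ge_atTop 0] with x hx
  exact hanti Set.self_mem_Ici hx hx

theorem eqOn_zero_of_bounded {G : H →L[ℂ] H} (hGsa : IsSelfAdjoint G)
    (hG : IsPositivePMap (pmapComp G A)) {u : ℝ → H} {C : ℝ} (hc : ContinuousOn u (Set.Ici 0))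
    (hu : IsStrongSolutionOn A (fun _ => 0) u (Set.Ioi 0)) (hC : ∀ x > 0, ‖u x‖ ≤ C)
    (h₀ : G.reApplyInnerSelf (u 0) ≤ 0) : Set.EqOn u 0 (Set.Ici 0) := by
  have hnonneg (x : ℝ) (hx : 0 < x) : 0 ≤ G.reApplyInnerSelf (u x) := by
    simpa only [one_mul] using h.mul_reApplyInnerSelf_nonneg hGsa hG (one_mul 1)
      (h.mem_halfLineSubspace_of_bounded hu hC hx)
  obtain ⟨u', -, hu⟩ := isStrongSolutionOn_zero_iff.1 hu
  have hanti := antitoneOn_reApplyInnerSelf hGsa hc (fun x hx => (hu x hx).1) fun x hx => by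
    simpa using hG.re_inner_nonneg (hu x hx).2
  have hzero (x : ℝ) (hx : 0 < x) : G.reApplyInnerSelf (u x) = 0 :=
    ((hanti Set.self_mem_Ici hx.le hx.le).trans h₀).antisymm (hnonneg x hx)
  have hpos : Set.EqOn u 0 (Set.Ioi 0) := by
    intro x hx
    by_contra hne
    have hderiv : 2 * (⟪G (u' x), u x⟫_ℂ).re = 0 :=
      (hasDerivAt_reApplyInnerSelf hGsa (hu x hx).1).unique <|
        (hasDerivAt_const x (0 : ℝ)).congr_of_eventuallyEq <| by
          filter_upwards [Ioi_mem_nhds hx] with y hy using hzero y hy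
    have hlt := hG.re_inner_pos (hu x hx).2 hne
    rw [map_neg, inner_neg_left, Complex.neg_re] at hlt
    linarith
  exact hpos.of_subset_closure hc continuousOn_const Set.Ioi_subset_Ici_self (closure_Ioi 0).ge

end IsResolventPair

namespace IsSignatureOperator

variable {J : H →L[ℂ] H} (hJ : IsSignatureOperator J)
include hJ

theorem apply_apply (v : H) : J (J v) = v :=
  DFunLike.congr_fun hJ.2 v

theorem pmapComp_pmapComp (L : H →ₗ.[ℂ] H) : pmapComp J (pmapComp J L) = L :=
  LinearPMap.ext' (LinearMap.ext fun v => hJ.apply_apply (L v))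

theorem inner_apply (v w : H) : ⟪J v, w⟫_ℂ = ⟪v, J w⟫_ℂ :=
  hJ.1.isSymmetric v w

theorem apply_Pplus (v : H) : J (Pplus J v) = Pplus J v := by
  simp [Pplus, hJ.apply_apply, add_comm]

theorem inner_Pplus_left {r : H} (hr : J r = r) (v : H) : ⟪Pplus J v, r⟫_ℂ = ⟪v, r⟫_ℂ := by
  have hsum : ⟪v + J v, r⟫_ℂ = 2 * ⟪v, r⟫_ℂ := by
    rw [inner_add_left, hJ.inner_apply, hr, two_mul]
  calc ⟪Pplus J v, r⟫_ℂ = 2⁻¹ * ⟪v + J v, r⟫_ℂ := by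
        rw [← Complex.conj_ofNat, ← map_inv₀, ← inner_smul_left]
        rfl
    _ = ⟪v, r⟫_ℂ := by rw [hsum, inv_mul_cancel_left₀ two_ne_zero]

theorem two_mul_norm_Pplus_sq (v : H) :
    2 * ‖Pplus J v‖ ^ 2 = ‖v‖ ^ 2 + J.reApplyInnerSelf v := by
  have hinner : ⟪Pplus J v, Pplus J v⟫_ℂ = 2⁻¹ * (⟪v, v⟫_ℂ + ⟪J v, v⟫_ℂ) := by
    rw [hJ.inner_Pplus_left (hJ.apply_Pplus v), hJ.inner_apply, ← inner_add_right,
      ← inner_smul_right]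
    rfl
  rw [@norm_sq_eq_re_inner ℂ, @norm_sq_eq_re_inner ℂ, hinner,
    ContinuousLinearMap.reApplyInnerSelf_apply, ← map_add]
  simp

/-- A vector of `H₊` orthogonal to `V` is `J`-positive, and it differs by
an element of `V` from a `J`-nonpositive vector. -/
theorem eq_zero_of_forall_inner_eq_zero {V : Submodule ℂ H}
    (hpos : ∀ v ∈ V, 0 ≤ J.reApplyInnerSelf v)
    (hdec : ∀ v, ∃ w ∈ V, J.reApplyInnerSelf (v - w) ≤ 0) {r : H} (hr : J r = r)
    (hrV : ∀ v ∈ V, ⟪v, r⟫_ℂ = 0) : r = 0 := by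
  obtain ⟨w, hw, hneg⟩ := hdec r
  have hsub : J.reApplyInnerSelf (r - w) = ‖r‖ ^ 2 + J.reApplyInnerSelf w := by
    have hrw : ⟪r, w⟫_ℂ = 0 := inner_eq_zero_symm.1 (hrV w hw)
    have hJwr : ⟪J w, r⟫_ℂ = 0 := by rw [hJ.inner_apply, hr, hrV w hw]
    simp only [ContinuousLinearMap.reApplyInnerSelf_apply, map_sub, hr, inner_sub_left,
      inner_sub_right, hrw, hJwr, sub_zero, zero_sub, sub_neg_eq_add, map_add,
      inner_self_eq_norm_sq]
  exact norm_le_zero_iff.1 (by nlinarith [hpos w hw, norm_nonneg r])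

theorem isClosed_map_Pplus {V : Submodule ℂ H} (hV : IsClosed (V : Set H))
    (hpos : ∀ v ∈ V, 0 ≤ J.reApplyInnerSelf v) :
    IsClosed (V.map (Pplus J : H →ₗ[ℂ] H) : Set H) := by
  have : CompleteSpace V := hV.completeSpace_coe
  let T : V →L[ℂ] H := Pplus J ∘L V.subtypeL
  have hT : AntilipschitzWith 2 T := T.antilipschitz_of_bound fun v => by
    have hsq := hJ.two_mul_norm_Pplus_sq v
    have hv := hpos v v.2
    have hle : ‖(v : H)‖ ^ 2 ≤ (2 * ‖Pplus J v‖) ^ 2 := by nlinarith [sq_nonneg ‖Pplus J v‖]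
    exact (sq_le_sq₀ (norm_nonneg _) (by positivity)).1 hle
  have hrange : Set.range T = Pplus J '' V := by
    rw [← Subtype.range_coe (s := (V : Set H)), ← Set.range_comp]
    rfl
  have hclosed : IsClosed (Pplus J '' V) := hrange ▸ hT.isClosed_range T.uniformContinuous
  exact hclosed

theorem exists_Pplus_eq {V : Submodule ℂ H} (hV : IsClosed (V : Set H))
    (hpos : ∀ v ∈ V, 0 ≤ J.reApplyInnerSelf v)
    (hdec : ∀ v, ∃ w ∈ V, J.reApplyInnerSelf (v - w) ≤ 0) {φ : H} (hφ : J φ = φ) :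
    ∃ v ∈ V, Pplus J v = φ := by
  have := (hJ.isClosed_map_Pplus hV hpos).completeSpace_coe
  obtain ⟨_, ⟨v, hv, rfl⟩, r, hr, rfl⟩ :=
    (V.map (Pplus J : H →ₗ[ℂ] H)).exists_add_mem_mem_orthogonal φ
  have hJr : J r = r := by
    rw [map_add] at hφ
    exact add_left_cancel ((congrArg (· + J r) (hJ.apply_Pplus v)).symm.trans hφ)
  have hr₀ : r = 0 := hJ.eq_zero_of_forall_inner_eq_zero hpos hdec hJr fun w hw => by
    rw [← hJ.inner_Pplus_left hJr]
    exact hr _ ⟨w, hw, rfl⟩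
  exact ⟨v, hv, by rw [hr₀, add_zero]; rfl⟩

end IsSignatureOperator

omit [CompleteSpace H] in
theorem IsStrongSolutionOn.sub {B : H →ₗ.[ℂ] H} {ψ₁ ψ₂ : ℝ → H} {s : Set ℝ}
    (h₁ : IsStrongSolutionOn B (fun _ => 0) ψ₁ s) (h₂ : IsStrongSolutionOn B (fun _ => 0) ψ₂ s) :
    IsStrongSolutionOn B (fun _ => 0) (ψ₁ - ψ₂) s := by
  rw [isStrongSolutionOn_zero_iff] at *
  obtain ⟨ψ₁', hc₁, h₁⟩ := h₁
  obtain ⟨ψ₂', hc₂, h₂⟩ := h₂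
  refine ⟨ψ₁' - ψ₂', hc₁.sub hc₂, fun x hx => ⟨(h₁ x hx).1.sub (h₂ x hx).1, ?_⟩⟩
  have := B.graph.sub_mem (h₁ x hx).2 (h₂ x hx).2
  rwa [Prod.mk_sub_mk, ← neg_sub'] at this

omit [CompleteSpace H] in
theorem IsStrongSolutionOn.clm_comp {B A : H →ₗ.[ℂ] H} {T : H →L[ℂ] H}
    (hT : ∀ a b, (a, b) ∈ B.graph → (T a, T b) ∈ A.graph) {ψ : ℝ → H} {s : Set ℝ}
    (hψ : IsStrongSolutionOn B (fun _ => 0) ψ s) :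
    IsStrongSolutionOn A (fun _ => 0) (fun x => T (ψ x)) s := by
  rw [isStrongSolutionOn_zero_iff] at *
  obtain ⟨ψ', hc, hψ⟩ := hψ
  refine ⟨fun x => T (ψ' x), T.continuous.comp_continuousOn hc, fun x hx => ⟨?_, ?_⟩⟩
  · exact (T.restrictScalars ℝ).hasFDerivAt.comp_hasDerivAt x (hψ x hx).1
  · rw [← map_neg]
    exact hT _ _ (hψ x hx).2

/-- `A = S B S⁻¹`, expressed through the graphs of the two unbounded operators. -/
def IsConjugate (S : H ≃L[ℂ] H) (A B : H →ₗ.[ℂ] H) : Prop :=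
  ∀ a b, (S a, S b) ∈ A.graph ↔ (a, b) ∈ B.graph

omit [CompleteSpace H] in
theorem isConjugate_of_domain_eq {S : H ≃L[ℂ] H} {A B : H →ₗ.[ℂ] H}
    (hdom : (A.domain : Set H) = (fun h => S h) '' (B.domain : Set H))
    (happly : ∀ (h : B.domain) (hSh : S (h : H) ∈ A.domain), A ⟨S (h : H), hSh⟩ = S (B h)) :
    IsConjugate S A B := by
  have hmem (a : H) : S a ∈ A.domain ↔ a ∈ B.domain := by
    rw [← SetLike.mem_coe, hdom]
    exact S.injective.mem_set_image
  intro a b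
  constructor <;> intro hgraph
  · have ha := (hmem a).1 (LinearPMap.mem_domain_of_mem_graph hgraph)
    rw [← LinearPMap.image_iff ((hmem a).2 ha), happly ⟨a, ha⟩] at hgraph
    exact (LinearPMap.image_iff ha).1 (S.injective hgraph)
  · have ha := LinearPMap.mem_domain_of_mem_graph hgraph
    rw [← LinearPMap.image_iff ((hmem a).2 ha), happly ⟨a, ha⟩, (LinearPMap.image_iff ha).2 hgraph]

/-- The bounded operator `(S⁻¹)* G S⁻¹` of the quadratic form of `G` transported along `S`. -/
def transportForm (S : H ≃L[ℂ] H) (G : H →L[ℂ] H) : H →L[ℂ] H :=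
  ContinuousLinearMap.adjoint (S.symm : H →L[ℂ] H) ∘L G ∘L (S.symm : H →L[ℂ] H)

theorem inner_transportForm (S : H ≃L[ℂ] H) (G : H →L[ℂ] H) (v w : H) :
    ⟪transportForm S G v, w⟫_ℂ = ⟪G (S.symm v), S.symm w⟫_ℂ :=
  ContinuousLinearMap.adjoint_inner_left (S.symm : H →L[ℂ] H) w (G (S.symm v))

theorem reApplyInnerSelf_transportForm (S : H ≃L[ℂ] H) (G : H →L[ℂ] H) (v : H) :
    (transportForm S G).reApplyInnerSelf v = G.reApplyInnerSelf (S.symm v) :=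
  congrArg RCLike.re (inner_transportForm S G v v)

theorem isSelfAdjoint_transportForm (S : H ≃L[ℂ] H) {G : H →L[ℂ] H} (hG : IsSelfAdjoint G) :
    IsSelfAdjoint (transportForm S G) :=
  hG.adjoint_conj _

namespace IsConjugate

variable {S : H ≃L[ℂ] H} {A B : H →ₗ.[ℂ] H} (hS : IsConjugate S A B)
include hS

omit [CompleteSpace H] in
theorem symm_mem_graph {a b : H} (hab : (a, b) ∈ A.graph) : (S.symm a, S.symm b) ∈ B.graph := by
  rwa [← hS, S.apply_symm_apply, S.apply_symm_apply]

theorem isPositivePMap_transportForm {G : H →L[ℂ] H} (hG : IsPositivePMap (pmapComp G B)) :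
    IsPositivePMap (pmapComp (transportForm S G) A) := by
  intro a ha
  obtain ⟨b, hb, hBb⟩ := B.mem_graph_iff.1 (hS.symm_mem_graph (A.mem_graph a))
  have hb₀ : (b : H) ≠ 0 := by
    rw [hb]
    exact S.symm.map_eq_zero_iff.not.2 ha
  have hinner : ⟪transportForm S G (A a), (a : H)⟫_ℂ = ⟪G (B b), (b : H)⟫_ℂ := by
    rw [inner_transportForm, hBb, hb]
  exact (hG b hb₀).trans_eq hinner.symm

end IsConjugate

theorem IsSignatureOperator.exists_mem_halfLineSubspace_Pplus_eq {J : H →L[ℂ] H}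
    (hJ : IsSignatureOperator J) {S : H ≃L[ℂ] H} {A : H →ₗ.[ℂ] H} {Q D : H →L[ℂ] H}
    (h : IsResolventPair A Q D) (hA : IsPositivePMap (pmapComp (transportForm S J) A))
    {φ : H} (hφ : J φ = φ) : ∃ k ∈ halfLineSubspace Q D 1, Pplus J (S.symm k) = φ := by
  have hsign {s : ℝ} (hs : s * s = 1) (k : H) (hk : k ∈ halfLineSubspace Q D s) :
      0 ≤ s * J.reApplyInnerSelf (S.symm k) := by
    rw [← reApplyInnerSelf_transportForm]
    exact h.mul_reApplyInnerSelf_nonneg (isSelfAdjoint_transportForm S hJ.1) hA hs hk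
  let V : Submodule ℂ H := (halfLineSubspace Q D 1).comap (S : H →ₗ[ℂ] H)
  have hdec (v : H) : ∃ w ∈ V, J.reApplyInnerSelf (v - w) ≤ 0 := by
    obtain ⟨k₁, hk₁, k₂, hk₂, hk⟩ := h.exists_add_eq_halfLineSubspace (S v)
    have hsub : v - S.symm k₁ = S.symm k₂ := by
      rw [sub_eq_iff_eq_add', ← map_add, hk, S.symm_apply_apply]
    refine ⟨S.symm k₁, Submodule.mem_comap.2 (by simpa using hk₁), ?_⟩
    rw [hsub]
    linarith [hsign (s := -1) (by norm_num) k₂ hk₂]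
  obtain ⟨v, hv, hvφ⟩ := hJ.exists_Pplus_eq (V := V)
    ((isClosed_halfLineSubspace Q D 1).preimage S.continuous)
    (fun v hv => by simpa using hsign (one_mul 1) (S v) hv) hdec hφ
  exact ⟨S v, hv, by rwa [S.symm_apply_apply]⟩

theorem IsSignatureOperator.reApplyInnerSelf_nonpos_of_Pplus_eq_zero {J : H →L[ℂ] H}
    (hJ : IsSignatureOperator J) {v : H} (hv : Pplus J v = 0) : J.reApplyInnerSelf v ≤ 0 := by
  have := hJ.two_mul_norm_Pplus_sq v
  rw [hv, norm_zero] at this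
  nlinarith [sq_nonneg ‖v‖]

theorem IsSignatureOperator.eqOn_zero_of_bounded {J : H →L[ℂ] H} (hJ : IsSignatureOperator J)
    {B : H →ₗ.[ℂ] H} (hB : IsPositivePMap (pmapComp J B)) (hsim : SimilarToSelfAdjoint B)
    {ψ : ℝ → H} (hc : ContinuousOn ψ (Set.Ici 0))
    (hψ : IsStrongSolutionOn B (fun _ => 0) ψ (Set.Ioi 0)) {C : ℝ}
    (hC : ∀ x ∈ Set.Ici (0 : ℝ), ‖ψ x‖ ≤ C) (h₀ : Pplus J (ψ 0) = 0) :
    Set.EqOn ψ 0 (Set.Ici 0) := by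
  obtain ⟨S, A, hA, hdom, happly⟩ := hsim
  have hS := isConjugate_of_domain_eq hdom happly
  obtain ⟨Q, D, h⟩ := exists_isResolventPair hA
  have hu := h.eqOn_zero_of_bounded (isSelfAdjoint_transportForm S hJ.1)
    (hS.isPositivePMap_transportForm hB) (u := fun x => S (ψ x))
    (S.continuous.comp_continuousOn hc) (hψ.clm_comp (T := S) fun a b => (hS a b).2)
    (fun x hx => (S : H →L[ℂ] H).le_opNorm_of_le (hC x hx.le)) <| by
      rw [reApplyInnerSelf_transportForm, S.symm_apply_apply]
      exact hJ.reApplyInnerSelf_nonpos_of_Pplus_eq_zero h₀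
  exact fun x hx => S.map_eq_zero_iff.1 (hu hx)

theorem IsSignatureOperator.exists_bounded_solution {J : H →L[ℂ] H} (hJ : IsSignatureOperator J)
    {B : H →ₗ.[ℂ] H} (hB : IsPositivePMap (pmapComp J B)) (hsim : SimilarToSelfAdjoint B)
    {φ : H} (hφ : J φ = φ) :
    ∃ ψ : ℝ → H, ContinuousOn ψ (Set.Ici 0) ∧
      IsStrongSolutionOn B (fun _ => 0) ψ (Set.Ioi 0) ∧
      Pplus J (ψ 0) = φ ∧ ∃ C : ℝ, ∀ x ∈ Set.Ici (0 : ℝ), ‖ψ x‖ ≤ C := by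
  obtain ⟨S, A, hA, hdom, happly⟩ := hsim
  have hS := isConjugate_of_domain_eq hdom happly
  obtain ⟨Q, D, h⟩ := exists_isResolventPair hA
  obtain ⟨k, hk, hkφ⟩ := hJ.exists_mem_halfLineSubspace_Pplus_eq h
    (hS.isPositivePMap_transportForm hB) hφ
  refine ⟨fun x => S.symm (absOrbit Q D k x),
    S.symm.continuous.comp_continuousOn (h.continuousOn_absOrbit k),
    (h.isStrongSolutionOn_absOrbit hk).clm_comp (T := S.symm) fun a b => hS.symm_mem_graph,
    by simpa only [absOrbit_zero] using hkφ, ‖(S.symm : H →L[ℂ] H)‖ * ‖k‖, fun x hx => ?_⟩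
  exact (S.symm : H →L[ℂ] H).le_opNorm_of_le (norm_absOrbit_le Q D k hx)

/-- Half-space problem: if `L = L* > 0` is densely defined and `B = JL` is
similar to a self-adjoint operator, then for every `φ₊ ∈ H₊` there is a unique bounded
solution of `dψ/dx = -Bψ` on `(0,∞)` with `P₊ψ(0) = φ₊`. -/
theorem statement1 (J : H →L[ℂ] H) (hJ : IsSignatureOperator J)
    (L : H →ₗ.[ℂ] H) (hdense : Dense (L.domain : Set H))
    (hLsa : IsSelfAdjoint L) (hLpos : IsPositivePMap L)
    (hsim : SimilarToSelfAdjoint (pmapComp J L))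
    (φp : H) (hφp : J φp = φp) :
    (∃ ψ : ℝ → H,
        ContinuousOn ψ (Set.Ici 0) ∧
        IsStrongSolutionOn (pmapComp J L) (fun _ => 0) ψ (Set.Ioi 0) ∧
        Pplus J (ψ 0) = φp ∧
        (∃ C : ℝ, ∀ x ∈ Set.Ici (0 : ℝ), ‖ψ x‖ ≤ C)) ∧
    (∀ ψ₁ ψ₂ : ℝ → H,
        (ContinuousOn ψ₁ (Set.Ici 0) ∧
          IsStrongSolutionOn (pmapComp J L) (fun _ => 0) ψ₁ (Set.Ioi 0) ∧
          Pplus J (ψ₁ 0) = φp ∧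
          (∃ C : ℝ, ∀ x ∈ Set.Ici (0 : ℝ), ‖ψ₁ x‖ ≤ C)) →
        (ContinuousOn ψ₂ (Set.Ici 0) ∧
          IsStrongSolutionOn (pmapComp J L) (fun _ => 0) ψ₂ (Set.Ioi 0) ∧
          Pplus J (ψ₂ 0) = φp ∧
          (∃ C : ℝ, ∀ x ∈ Set.Ici (0 : ℝ), ‖ψ₂ x‖ ≤ C)) →
        Set.EqOn ψ₁ ψ₂ (Set.Ici 0)) := by
  have hB : IsPositivePMap (pmapComp J (pmapComp J L)) := by
    rwa [hJ.pmapComp_pmapComp]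
  refine ⟨hJ.exists_bounded_solution hB hsim hφp, ?_⟩
  rintro ψ₁ ψ₂ ⟨hc₁, hψ₁, h₁, C₁, hC₁⟩ ⟨hc₂, hψ₂, h₂, C₂, hC₂⟩ x hx
  have hC (y : ℝ) (hy : y ∈ Set.Ici 0) : ‖(ψ₁ - ψ₂) y‖ ≤ C₁ + C₂ :=
    norm_sub_le_of_le (hC₁ y hy) (hC₂ y hy)
  have h₀ : Pplus J ((ψ₁ - ψ₂) 0) = 0 := by
    rw [Pi.sub_apply, map_sub, h₁, h₂, sub_self]
  exact sub_eq_zero.1 (hJ.eqOn_zero_of_bounded hB hsim (hc₁.sub hc₂) (hψ₁.sub hψ₂) hC h₀ hx)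

end
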